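/- Let α ≤ 0 and T ∈ D'(ℝ^d). Then T ∈ C^α if and only if there exists a test function φ ∈ D with ∫φ ≠ 0 such that for every n ∈ ℕ: |T(φ_x^ε)| ≲ ε^α uniformly for x ∈ ℚ^d ∩ B(0,n) and ε ∈ {2^{-k} : k ∈ ℕ}. -/

import Mathlib

open MeasureTheory Metric Set Filter

noncomputable section

abbrev Ed (d : ℕ) := EuclideanSpace ℝ (Fin d)

/-- Test functions: smooth compactly supported functions on ℝ^d. -/
def IsTestFunction {d : ℕ} (φ : Ed d → ℝ) : Prop :=
  ContDiff ℝ (⊤ : ℕ∞) φ ∧ HasCompactSupport φ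

/-- The scaled test function `φ_x^λ(z) = λ^{-d} φ(λ⁻¹(z - x))`. -/
def scaled {d : ℕ} (φ : Ed d → ℝ) (x : Ed d) (l : ℝ) : Ed d → ℝ :=
  fun z => (l ^ d)⁻¹ * φ (l⁻¹ • (z - x))

/-- The `C^r` norm: sup of the norms of the iterated derivatives of order ≤ r. -/
def Cnorm {d : ℕ} (r : ℕ) (φ : Ed d → ℝ) : ℝ :=
  ⨆ i : Fin (r + 1), ⨆ x : Ed d, ‖iteratedFDeriv ℝ (i : ℕ) φ x‖

/-- The family `B_r` of test functions supported in `B(0,1)` with `C^r` norm at most 1. -/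
def Br {d : ℕ} (r : ℕ) (ψ : Ed d → ℝ) : Prop :=
  IsTestFunction ψ ∧ tsupport ψ ⊆ closedBall (0 : Ed d) 1 ∧ Cnorm r ψ ≤ 1

/-- A linear functional is a distribution if on every compact set it is bounded
by some `C^r` norm. -/
def IsDistribution {d : ℕ} (T : (Ed d → ℝ) →ₗ[ℝ] ℝ) : Prop :=
  ∀ K : Set (Ed d), IsCompact K → ∃ r : ℕ, ∃ C : ℝ,
    ∀ φ : Ed d → ℝ, IsTestFunction φ → tsupport φ ⊆ K → |T φ| ≤ C * Cnorm r φ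

/-- A germ: a measurable family of distributions. -/
def IsGerm {d : ℕ} (F : Ed d → ((Ed d → ℝ) →ₗ[ℝ] ℝ)) : Prop :=
  (∀ x, IsDistribution (F x)) ∧
  ∀ ψ : Ed d → ℝ, IsTestFunction ψ → Measurable fun x => F x ψ

/-- Monomial `y^k` for a multi-index `k`. -/
def mono {d : ℕ} (k : Fin d → ℕ) (y : Ed d) : ℝ := ∏ i, (y i) ^ (k i)

/-- Convolution of two functions. -/
def conv {d : ℕ} (f g : Ed d → ℝ) : Ed d → ℝ := fun x => ∫ y, f (x - y) * g y

/-- `rIndex α` is the smallest integer `r > -α` (for `α ≤ 0`). -/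
def rIndex (α : ℝ) : ℕ := Nat.floor (-α) + 1

/-- Negative Hölder space condition `T ∈ C^α` for `α ≤ 0`. -/
def HolderNeg {d : ℕ} (α : ℝ) (T : (Ed d → ℝ) →ₗ[ℝ] ℝ) : Prop :=
  ∀ K : Set (Ed d), IsCompact K → ∃ C : ℝ, ∀ x ∈ K, ∀ ε ∈ Set.Ioc (0:ℝ) 1,
    ∀ ψ : Ed d → ℝ, Br (rIndex α) ψ → |T (scaled ψ x ε)| ≤ C * ε ^ α

/-- `(α,γ)`-coherence of a germ with respect to the test function φ. -/
def AlphaGammaCoherent {d : ℕ} (α γ : ℝ) (F : Ed d → ((Ed d → ℝ) →ₗ[ℝ] ℝ))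
    (φ : Ed d → ℝ) : Prop :=
  ∀ K : Set (Ed d), IsCompact K → ∃ C : ℝ, ∀ y ∈ K, ∀ z ∈ K, ∀ ε ∈ Set.Ioc (0:ℝ) 1,
    |F z (scaled φ y ε) - F y (scaled φ y ε)| ≤ C * ε ^ α * (‖z - y‖ + ε) ^ (γ - α)

/-- Global homogeneity bound β for a germ with respect to the test function φ. -/
def HomBound {d : ℕ} (β : ℝ) (F : Ed d → ((Ed d → ℝ) →ₗ[ℝ] ℝ)) (φ : Ed d → ℝ) : Prop :=
  ∀ K : Set (Ed d), IsCompact K → ∃ C : ℝ, ∀ x ∈ K, ∀ ε ∈ Set.Ioc (0:ℝ) 1,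
    |F x (scaled φ x ε)| ≤ C * ε ^ β

/-! ### Convolution with a scalar kernel -/

/-- Convolution of a scalar kernel with a vector valued function. -/
def cv {d : ℕ} {F : Type*} [NormedAddCommGroup F] [NormedSpace ℝ F]
    (k : Ed d → ℝ) (f : Ed d → F) : Ed d → F := fun x => ∫ t, k t • f (x - t)

section CV
variable {d : ℕ} {F : Type*} [NormedAddCommGroup F] [NormedSpace ℝ F]

theorem cv_eq_convolution (k : Ed d → ℝ) (f : Ed d → F) :
    cv k f = MeasureTheory.convolution k f (ContinuousLinearMap.lsmul ℝ ℝ) volume := rfl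

theorem cv_fderiv [CompleteSpace F] {k : Ed d → ℝ} {f : Ed d → F} (hk : Continuous k)
    (hf : ContDiff ℝ 1 f) (hfc : HasCompactSupport f) :
    fderiv ℝ (cv k f) = cv k (fderiv ℝ f) := by
  ext1 x
  have h := HasCompactSupport.hasFDerivAt_convolution_right (𝕜 := ℝ) (μ := (volume : Measure (Ed d)))
    (ContinuousLinearMap.lsmul ℝ ℝ) hfc hk.locallyIntegrable hf x
  rw [cv_eq_convolution, h.fderiv]
  rfl

theorem cv_integrable {k : Ed d → ℝ} {f : Ed d → F} (hk : Continuous k) (hkc : HasCompactSupport k)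
    (hf : Continuous f) (x : Ed d) : Integrable (fun t => k t • f (x - t)) := by
  apply Continuous.integrable_of_hasCompactSupport
  · fun_prop
  · exact hkc.smul_right

theorem cv_iteratedFDeriv [CompleteSpace F] {k : Ed d → ℝ} {f : Ed d → F} (hk : Continuous k)
    (hf : ContDiff ℝ (⊤ : ℕ∞) f) (hfc : HasCompactSupport f) (i : ℕ) :
    iteratedFDeriv ℝ i (cv k f) = cv k (iteratedFDeriv ℝ i f) := by
  induction i with
  | zero =>
    ext x m
    have h1 : cv k (iteratedFDeriv ℝ 0 f) x =
        (continuousMultilinearCurryFin0 ℝ (Ed d) F).symm (cv k f x) := by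
      simp only [cv, iteratedFDeriv_zero_eq_comp, Function.comp]
      refine Eq.trans ?_ ((continuousMultilinearCurryFin0 ℝ (Ed d)
        F).symm.toContinuousLinearEquiv.integral_comp_comm _)
      simp
    rw [h1]
    simp
  | succ i ih =>
    have hfi : ContDiff ℝ 1 (iteratedFDeriv ℝ i f) :=
      hf.iteratedFDeriv_right (m := 1) (by exact_mod_cast le_top)
    have hfi' : Continuous (fderiv ℝ (iteratedFDeriv ℝ i f)) := hfi.continuous_fderiv (by simp)
    rw [iteratedFDeriv_succ_eq_comp_left, iteratedFDeriv_succ_eq_comp_left, ih,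
      cv_fderiv hk hfi (hfc.iteratedFDeriv i)]
    ext1 x
    simp only [cv, Function.comp]
    let e : (Ed d →L[ℝ] Ed d [×i]→L[ℝ] F) ≃L[ℝ] (Ed d [×(i + 1)]→L[ℝ] F) :=
      (continuousMultilinearCurryLeftEquiv ℝ (fun _ : Fin (i + 1) => Ed d)
        F).symm.toContinuousLinearEquiv
    have h := ContinuousLinearEquiv.integral_comp_comm (𝕜 := ℝ)
        (E := (Ed d →L[ℝ] Ed d [×i]→L[ℝ] F)) (F := (Ed d [×(i + 1)]→L[ℝ] F))
        e (μ := (volume : Measure (Ed d)))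
        (fun t => k t • fderiv ℝ (iteratedFDeriv ℝ i f) (x - t))
    refine Eq.trans h.symm ?_
    simp only [map_smul]
    rfl

theorem cv_comm (k f : Ed d → ℝ) : cv k f = cv f k := by
  ext x
  simp only [cv, smul_eq_mul]
  rw [← integral_sub_left_eq_self _ volume x]
  simp [mul_comm]

theorem cv_sub {k : Ed d → ℝ} {f g : Ed d → F} (hk : Continuous k) (hkc : HasCompactSupport k)
    (hf : Continuous f) (hg : Continuous g) : cv k (f - g) = cv k f - cv k g := by
  ext x
  simp only [cv, Pi.sub_apply, smul_sub]
  exact integral_sub (cv_integrable hk hkc hf x) (cv_integrable hk hkc hg x)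

theorem cv_cv_comm {k l : Ed d → ℝ} {f : Ed d → ℝ} (hk : Continuous k) (hkc : HasCompactSupport k)
    (hl : Continuous l) (hlc : HasCompactSupport l) (hf : Continuous f) :
    cv k (cv l f) = cv l (cv k f) := by
  ext x
  simp only [cv, smul_eq_mul, ← integral_const_mul]
  rw [integral_integral_swap_of_hasCompactSupport]
  · congr 1; ext t; congr 1; ext s
    rw [sub_right_comm]; ring
  · simp only [Function.uncurry_def]; fun_prop
  · apply HasCompactSupport.of_support_subset_isCompact (hkc.isCompact.prod hlc.isCompact)
    rintro ⟨s, t⟩ h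
    simp only [Function.mem_support, Function.uncurry] at h
    exact ⟨subset_tsupport _ (left_ne_zero_of_mul h),
      subset_tsupport _ (left_ne_zero_of_mul (right_ne_zero_of_mul h))⟩

theorem cv_test {k f : Ed d → ℝ} (hk : Continuous k) (hkc : HasCompactSupport k)
    (hf : IsTestFunction f) : IsTestFunction (cv k f) := by
  rw [cv_eq_convolution]
  exact ⟨HasCompactSupport.contDiff_convolution_right _ hf.2 hk.locallyIntegrable hf.1,
    HasCompactSupport.convolution _ hkc hf.2⟩

theorem cv_support {k : Ed d → ℝ} {f : Ed d → F} {a b : ℝ} (hk : tsupport k ⊆ closedBall 0 a)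
    (hf : tsupport f ⊆ closedBall 0 b) : tsupport (cv k f) ⊆ closedBall 0 (a + b) := by
  apply closure_minimal _ isClosed_closedBall
  intro x hx
  by_contra hxa
  apply hx
  simp only [cv]
  apply integral_eq_zero_of_ae
  filter_upwards with t
  by_cases h : k t = 0
  · simp [h]
  by_cases h' : f (x - t) = 0
  · simp [h']
  exfalso; apply hxa
  have h1 := hk (subset_tsupport _ h)
  have h2 := hf (subset_tsupport _ h')
  simp only [mem_closedBall_zero_iff] at h1 h2 ⊢
  calc ‖x‖ = ‖t + (x - t)‖ := by simp
    _ ≤ _ := norm_add_le _ _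
    _ ≤ _ := add_le_add h1 h2

theorem cv_bound {k : Ed d → ℝ} {f : Ed d → F} {B : ℝ} (hk : Continuous k)
    (hkc : HasCompactSupport k) (hB : ∀ x, ‖f x‖ ≤ B) (x : Ed d) :
    ‖cv k f x‖ ≤ (∫ t, |k t|) * B := by
  simp only [cv]
  rw [← integral_mul_const]
  apply norm_integral_le_of_norm_le
  · exact ((hk.integrable_of_hasCompactSupport hkc).abs).mul_const _
  · filter_upwards with t
    rw [norm_smul, Real.norm_eq_abs]
    exact mul_le_mul_of_nonneg_left (hB _) (abs_nonneg _)

theorem cv_scaled {φ : Ed d → ℝ} {f : Ed d → F} {l : ℝ} (hl : 0 < l) (x : Ed d) :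
    cv (scaled φ 0 l) f x = ∫ z, φ z • f (x - l • z) := by
  have h := Measure.integral_comp_inv_smul (volume : Measure (Ed d))
    (fun z => φ z • f (x - l • z)) l
  simp only [smul_inv_smul₀ hl.ne', finrank_euclideanSpace, Fintype.card_fin,
    abs_of_pos (pow_pos hl d)] at h
  simp only [cv, scaled, sub_zero, mul_smul]
  rw [integral_smul, h, inv_smul_smul₀ (pow_pos hl d).ne']

end CV

/-! ### Scaling -/
section Scale
variable {d : ℕ}

theorem scaled_test {φ : Ed d → ℝ} (hφ : IsTestFunction φ) (x : Ed d) {l : ℝ} (hl : 0 < l) :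
    IsTestFunction (scaled φ x l) := by
  refine ⟨?_, ?_⟩
  · unfold scaled
    have := hφ.1
    fun_prop
  · have h : HasCompactSupport (fun z : Ed d => φ (l⁻¹ • (z - x))) := by
      have := hφ.2.comp_homeomorph
        ((Homeomorph.addRight (-x)).trans (Homeomorph.smulOfNeZero l⁻¹ (inv_pos.2 hl).ne'))
      simpa [Function.comp_def, sub_eq_add_neg] using this
    exact h.mul_left

theorem scaled_tsupport {φ : Ed d → ℝ} {R : ℝ} (h : tsupport φ ⊆ closedBall 0 R) (x : Ed d) {l : ℝ}
    (hl : 0 < l) : tsupport (scaled φ x l) ⊆ closedBall x (l * R) := by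
  apply closure_minimal _ isClosed_closedBall
  intro z hz
  have h1 : φ (l⁻¹ • (z - x)) ≠ 0 := right_ne_zero_of_mul hz
  have h2 := h (subset_tsupport _ h1)
  rw [mem_closedBall_zero_iff, norm_smul, Real.norm_eq_abs, abs_of_pos (inv_pos.2 hl),
    inv_mul_le_iff₀ hl] at h2
  rwa [mem_closedBall, dist_eq_norm]

theorem scaled_scaled (φ : Ed d → ℝ) (x y : Ed d) {l h : ℝ} (hh : 0 < h) :
    scaled (scaled φ y l) x h = scaled φ (x + h • y) (h * l) := by
  ext z
  simp only [scaled]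
  have : l⁻¹ • (h⁻¹ • (z - x) - y) = (h * l)⁻¹ • (z - (x + h • y)) := by
    rw [mul_inv, mul_comm, mul_smul, ← sub_sub, smul_sub h⁻¹ (z - x), inv_smul_smul₀ hh.ne']
  rw [this, mul_pow, mul_inv (h ^ d), mul_assoc]

theorem scaled_iteratedFDeriv {φ : Ed d → ℝ} (hφ : ContDiff ℝ (⊤ : ℕ∞) φ) (x : Ed d) (l : ℝ) (i : ℕ)
    (z : Ed d) : iteratedFDeriv ℝ i (scaled φ x l) z =
      (l ^ d)⁻¹ • (l⁻¹) ^ i • iteratedFDeriv ℝ i φ (l⁻¹ • (z - x)) := by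
  have hi : ContDiff ℝ i φ := hφ.of_le (by exact_mod_cast le_top)
  have h1 : scaled φ x l = fun z => (fun w => (l ^ d)⁻¹ • φ (l⁻¹ • w)) (z - x) := rfl
  rw [h1, iteratedFDeriv_comp_sub (f := fun w => (l ^ d)⁻¹ • φ (l⁻¹ • w)), iteratedFDeriv_const_smul_apply',
    iteratedFDeriv_comp_const_smul _ hi]
  apply ContDiff.contDiffAt
  fun_prop

end Scale

/-! ### Norms and representation of distributions -/
section Rep
variable {d : ℕ}

theorem test_cont {f : Ed d → ℝ} (hf : IsTestFunction f) (i : ℕ) :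
    Continuous (iteratedFDeriv ℝ i f) :=
  hf.1.continuous_iteratedFDeriv (by exact_mod_cast le_top)

theorem test_bound {f : Ed d → ℝ} (hf : IsTestFunction f) (i : ℕ) :
    ∃ B, ∀ x, ‖iteratedFDeriv ℝ i f x‖ ≤ B :=
  (test_cont hf i).bounded_above_of_compact_support (hf.2.iteratedFDeriv i)

theorem le_Cnorm {f : Ed d → ℝ} (hf : IsTestFunction f) {i q : ℕ} (hi : i ≤ q) (x : Ed d) :
    ‖iteratedFDeriv ℝ i f x‖ ≤ Cnorm q f := by
  obtain ⟨B, hB⟩ := test_bound hf i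
  have h1 : ‖iteratedFDeriv ℝ i f x‖ ≤ ⨆ x, ‖iteratedFDeriv ℝ i f x‖ :=
    le_ciSup (f := fun x => ‖iteratedFDeriv ℝ i f x‖) ⟨B, by rintro _ ⟨x, rfl⟩; exact hB x⟩ x
  exact h1.trans (le_ciSup (f := fun i : Fin (q + 1) => ⨆ x, ‖iteratedFDeriv ℝ (i : ℕ) f x‖)
    (Set.finite_range _).bddAbove ⟨i, Nat.lt_succ_of_le hi⟩)

theorem Cnorm_le {f : Ed d → ℝ} {q : ℕ} {B : ℝ}
    (h : ∀ i ≤ q, ∀ x, ‖iteratedFDeriv ℝ i f x‖ ≤ B) : Cnorm q f ≤ B :=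
  ciSup_le fun i => ciSup_le fun x => h i (Nat.lt_succ_iff.1 i.2) x

theorem test_lip {f : Ed d → ℝ} (hf : IsTestFunction f) {i : ℕ} {B : ℝ}
    (hB : ∀ x, ‖iteratedFDeriv ℝ (i + 1) f x‖ ≤ B) (x y : Ed d) :
    ‖iteratedFDeriv ℝ i f x - iteratedFDeriv ℝ i f y‖ ≤ B * ‖x - y‖ := by
  apply Convex.norm_image_sub_le_of_norm_fderiv_le (𝕜 := ℝ) (s := univ) _ _ convex_univ
    (mem_univ _) (mem_univ _)
  · intro z _
    exact (hf.1.of_le (m := (i + 1 : ℕ)) (by exact_mod_cast le_top)).contDiffAt.differentiableAt_iteratedFDeriv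
      (by exact_mod_cast Nat.lt_succ_self i)
  · intro z _
    rw [norm_fderiv_iteratedFDeriv]
    exact hB z

/-- The space of test functions. -/
def TF (d : ℕ) : Submodule ℝ (Ed d → ℝ) where
  carrier := {f | IsTestFunction f}
  add_mem' ha hb := ⟨ha.1.add hb.1, ha.2.add hb.2⟩
  zero_mem' := ⟨contDiff_const, HasCompactSupport.zero⟩
  smul_mem' c _ hf := ⟨contDiff_const.smul hf.1, hf.2.smul_left (f := fun _ => c)⟩

/-- Target space of jets. -/
def XX (d q : ℕ) := ∀ i : Fin (q + 1), BoundedContinuousFunction (Ed d) (Ed d [×(i : ℕ)]→L[ℝ] ℝ)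

instance (d q : ℕ) : NormedAddCommGroup (XX d q) :=
  inferInstanceAs (NormedAddCommGroup
    (∀ i : Fin (q + 1), BoundedContinuousFunction (Ed d) (Ed d [×(i : ℕ)]→L[ℝ] ℝ)))

instance (d q : ℕ) : NormedSpace ℝ (XX d q) :=
  inferInstanceAs (NormedSpace ℝ
    (∀ i : Fin (q + 1), BoundedContinuousFunction (Ed d) (Ed d [×(i : ℕ)]→L[ℝ] ℝ)))

instance (d q : ℕ) : CompleteSpace (XX d q) :=
  inferInstanceAs (CompleteSpace
    (∀ i : Fin (q + 1), BoundedContinuousFunction (Ed d) (Ed d [×(i : ℕ)]→L[ℝ] ℝ)))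

/-- Evaluation of a jet. -/
def evv {d q : ℕ} (i : Fin (q + 1)) (x : Ed d) : XX d q →L[ℝ] (Ed d [×(i : ℕ)]→L[ℝ] ℝ) where
  toFun f := f i x
  map_add' _ _ := rfl
  map_smul' _ _ := rfl
  cont := (BoundedContinuousFunction.evalCLM ℝ x).continuous.comp
    (continuous_apply (A := fun i : Fin (q + 1) =>
      BoundedContinuousFunction (Ed d) (Ed d [×(i : ℕ)]→L[ℝ] ℝ)) i)

theorem XX_ext {d q : ℕ} {a b : XX d q} (h : ∀ i x, evv i x a = evv i x b) : a = b := by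
  funext i
  ext1 x
  exact h i x

/-- The jet of a test function. -/
def JJ (d q : ℕ) : TF d →ₗ[ℝ] XX d q where
  toFun f i := BoundedContinuousFunction.ofNormedAddCommGroup (iteratedFDeriv ℝ (i : ℕ) (f : Ed d → ℝ))
    (test_cont f.2 i) (Classical.choose (test_bound f.2 i)) (Classical.choose_spec (test_bound f.2 i))
  map_add' f g := by
    apply XX_ext
    intro i x
    have hf := f.2.1.of_le (m := (i : ℕ)) (by exact_mod_cast le_top)
    have hg := g.2.1.of_le (m := (i : ℕ)) (by exact_mod_cast le_top)
    exact iteratedFDeriv_add_apply hf.contDiffAt hg.contDiffAt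
  map_smul' c f := by
    apply XX_ext
    intro i x
    have hf := f.2.1.of_le (m := (i : ℕ)) (by exact_mod_cast le_top)
    exact iteratedFDeriv_const_smul_apply hf.contDiffAt

theorem JJ_apply {q : ℕ} (f : TF d) (i : Fin (q + 1)) (x : Ed d) :
    evv i x (JJ d q f) = iteratedFDeriv ℝ (i : ℕ) (f : Ed d → ℝ) x := rfl

theorem JJ_inj (q : ℕ) : Function.Injective (JJ d q) := by
  intro f g h
  ext x
  have h1 : evv 0 x (JJ d q f) = evv 0 x (JJ d q g) := by rw [h]
  rw [JJ_apply, JJ_apply] at h1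
  have h2 := congrArg (fun m => m 0) h1
  exact h2

theorem Cnorm_le_JJ {q : ℕ} (f : TF d) : Cnorm q (f : Ed d → ℝ) ≤ ‖JJ d q f‖ := by
  apply Cnorm_le
  intro i hi x
  have h1 := norm_le_pi_norm (ι := Fin (q + 1))
    (G := fun i => BoundedContinuousFunction (Ed d) (Ed d [×(i : ℕ)]→L[ℝ] ℝ))
    (JJ d q f) ⟨i, Nat.lt_succ_of_le hi⟩
  exact (BoundedContinuousFunction.norm_coe_le_norm
    (JJ d q f ⟨i, Nat.lt_succ_of_le hi⟩) x).trans h1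

theorem dist_rep {T : (Ed d → ℝ) →ₗ[ℝ] ℝ} (hT : IsDistribution T) {K : Set (Ed d)}
    (hK : IsCompact K) : ∃ q : ℕ, ∃ L : XX d q →L[ℝ] ℝ,
      ∀ f : TF d, tsupport (f : Ed d → ℝ) ⊆ K → T f = L (JJ d q f) := by
  obtain ⟨q, C, hC⟩ := hT K hK
  let S : Submodule ℝ (TF d) :=
    { carrier := {f | ∀ x ∉ K, (f : Ed d → ℝ) x = 0}
      add_mem' := fun ha hb x hx => by simp [ha x hx, hb x hx]
      zero_mem' := fun x hx => rfl
      smul_mem' := fun c f hf x hx => by simp [hf x hx] }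
  have hS : ∀ f : S, tsupport ((f : TF d) : Ed d → ℝ) ⊆ K := by
    intro f
    apply closure_minimal _ hK.isClosed
    intro x hx
    by_contra h
    exact hx (f.2 x h)
  let J : S →ₗ[ℝ] XX d q := (JJ d q).comp S.subtype
  have hJ : Function.Injective J := (JJ_inj q).comp Subtype.val_injective
  let e := LinearEquiv.ofInjective J hJ
  let T' : LinearMap.range J →ₗ[ℝ] ℝ := (T.comp ((TF d).subtype.comp S.subtype)).comp e.symm.toLinearMap
  have hT' : ∀ f : S, T' (e f) = T (f : TF d) := by
    intro f
    simp [T']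
  let T'' : StrongDual ℝ (LinearMap.range J) := T'.mkContinuous |C| (by
    intro x
    obtain ⟨f, rfl⟩ := e.surjective x
    rw [hT']
    have h1 := hC _ (f : TF d).2 (hS f)
    rw [Real.norm_eq_abs]
    have h2 : ‖e f‖ = ‖JJ d q (f : TF d)‖ := rfl
    rw [h2]
    have h0 : 0 ≤ Cnorm q ((f : TF d) : Ed d → ℝ) :=
      (norm_nonneg _).trans (le_Cnorm (f : TF d).2 (Nat.zero_le q) 0)
    calc _ ≤ _ := h1
      _ ≤ |C| * Cnorm q ((f : TF d) : Ed d → ℝ) := mul_le_mul_of_nonneg_right (le_abs_self _) h0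
      _ ≤ _ := mul_le_mul_of_nonneg_left (Cnorm_le_JJ _) (abs_nonneg _))
  obtain ⟨L, hL, -⟩ := exists_extension_norm_eq _ T''
  refine ⟨q, L, fun f hf => ?_⟩
  let g : S := ⟨f, fun x hx => by
    by_contra h
    exact hx (hf (subset_tsupport _ h))⟩
  have h3 := hL (e g)
  have h4 : ((e g : LinearMap.range J) : XX d q) = JJ d q f := rfl
  rw [h4] at h3
  rw [h3]
  exact (hT' g).symm

/-- Translation of a test function. -/
def tsl (f : TF d) (y : Ed d) : TF d := ⟨fun x => (f : Ed d → ℝ) (x - y), by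
  have h := f.2
  refine ⟨h.1.comp (contDiff_id.sub contDiff_const), ?_⟩
  have := h.2.comp_homeomorph (Homeomorph.addRight (-y))
  simpa [Function.comp_def, sub_eq_add_neg] using this⟩

theorem JJ_trans_continuous {q : ℕ} (f : TF d) : Continuous fun y => JJ d q (tsl f y) := by
  apply continuous_pi
  intro i
  obtain ⟨B, hB⟩ := test_bound f.2 ((i : ℕ) + 1)
  have hB0 : 0 ≤ B := (norm_nonneg _).trans (hB 0)
  have : LipschitzWith ⟨B, hB0⟩ fun y => JJ d q (tsl f y) i := by
    apply LipschitzWith.of_dist_le_mul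
    intro y z
    rw [BoundedContinuousFunction.dist_le (by positivity)]
    intro x
    change dist (iteratedFDeriv ℝ (i : ℕ) (fun x => (f : Ed d → ℝ) (x - y)) x)
      (iteratedFDeriv ℝ (i : ℕ) (fun x => (f : Ed d → ℝ) (x - z)) x) ≤ _
    rw [dist_eq_norm]
    rw [iteratedFDeriv_comp_sub, iteratedFDeriv_comp_sub]
    refine (test_lip f.2 hB _ _).trans (le_of_eq ?_)
    rw [dist_comm, dist_eq_norm, sub_sub_sub_cancel_left]
    rfl
  exact this.continuous

theorem trans_tsupport {f : TF d} {a b : ℝ} (hf : tsupport (f : Ed d → ℝ) ⊆ closedBall 0 a)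
    {y : Ed d} (hy : ‖y‖ ≤ b) : tsupport (tsl f y : Ed d → ℝ) ⊆ closedBall 0 (a + b) := by
  apply closure_minimal _ isClosed_closedBall
  intro x hx
  have h1 := hf (subset_tsupport _ hx)
  simp only [mem_closedBall_zero_iff] at h1 ⊢
  calc ‖x‖ = ‖(x - y) + y‖ := by simp
    _ ≤ _ := norm_add_le _ _
    _ ≤ _ := add_le_add h1 hy

theorem test_ball {f : Ed d → ℝ} (hf : HasCompactSupport f) :
    ∃ a, 0 ≤ a ∧ tsupport f ⊆ closedBall 0 a := by
  obtain ⟨a, ha⟩ := hf.isCompact.isBounded.subset_closedBall 0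
  exact ⟨max a 0, le_max_right _ _, ha.trans (closedBall_subset_closedBall (le_max_left _ _))⟩

theorem T_trans_continuousOn {T : (Ed d → ℝ) →ₗ[ℝ] ℝ} (hT : IsDistribution T) (f : TF d) (b : ℝ) :
    ContinuousOn (fun y => T (tsl f y)) (closedBall 0 b) := by
  obtain ⟨a, -, ha⟩ := test_ball f.2.2
  obtain ⟨q, L, hL⟩ := dist_rep hT (isCompact_closedBall (0 : Ed d) (a + b))
  have h1 : Continuous fun y => L (JJ d q (tsl f y)) := L.continuous.comp (JJ_trans_continuous f)
  apply h1.continuousOn.congr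
  intro y hy
  exact hL _ (trans_tsupport ha (by simpa using hy))

/-- The key interchange inequality. -/
theorem T_cv_le {T : (Ed d → ℝ) →ₗ[ℝ] ℝ} (hT : IsDistribution T) {f g : Ed d → ℝ}
    (hf : IsTestFunction f) (hg : Continuous g) (hgc : HasCompactSupport g) {M : ℝ}
    (hM : ∀ y, g y ≠ 0 → |T (fun x => f (x - y))| ≤ M) :
    |T (cv g f)| ≤ M * ∫ y, |g y| := by
  let f' : TF d := ⟨f, hf⟩
  obtain ⟨a, -, ha⟩ := test_ball hf.2
  obtain ⟨b, -, hb⟩ := test_ball hgc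
  obtain ⟨q, L, hL⟩ := dist_rep hT (isCompact_closedBall (0 : Ed d) (a + b))
  have hInt : Integrable fun y => g y • JJ d q (tsl f' y) := by
    apply Continuous.integrable_of_hasCompactSupport
    · exact hg.smul (JJ_trans_continuous f')
    · exact hgc.smul_right
  let h : TF d := ⟨cv g f, cv_test hg hgc hf⟩
  have key : JJ d q h = ∫ y, g y • JJ d q (tsl f' y) := by
    apply XX_ext
    intro i x
    rw [JJ_apply]
    let ev : XX d q →L[ℝ] (Ed d [×(i : ℕ)]→L[ℝ] ℝ) := evv i x
    have h1 : ev (∫ y, g y • JJ d q (tsl f' y)) = ∫ y, ev (g y • JJ d q (tsl f' y)) :=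
      (ev.integral_comp_comm hInt).symm
    refine Eq.trans ?_ h1.symm
    change iteratedFDeriv ℝ (i : ℕ) (cv g f) x = _
    rw [cv_iteratedFDeriv hg hf.1 hf.2]
    simp only [cv]
    congr 1
    ext1 y
    rw [map_smul]
    congr 1
    change _ = iteratedFDeriv ℝ (i : ℕ) (fun x => f (x - y)) x
    rw [iteratedFDeriv_comp_sub]
  have h2 : T (cv g f) = ∫ y, L (g y • JJ d q (tsl f' y)) := by
    rw [L.integral_comp_comm hInt, ← key]
    apply hL h
    rw [add_comm]
    exact cv_support hb ha
  rw [h2, ← integral_const_mul, ← Real.norm_eq_abs]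
  apply norm_integral_le_of_norm_le
  · exact ((hg.integrable_of_hasCompactSupport hgc).abs).const_mul _
  · filter_upwards with y
    rw [map_smul, norm_smul, mul_comm, Real.norm_eq_abs (g y)]
    by_cases hy : g y = 0
    · simp [hy]
    · have h3 := hb (subset_tsupport _ hy)
      rw [← hL _ (trans_tsupport ha (by simpa using h3))]
      exact mul_le_mul_of_nonneg_right (hM y hy) (abs_nonneg _)

end Rep

/-! ### Tweaking the test function -/
section Tweak
variable {d : ℕ}

theorem exists_coeff (m : ℕ) : ∃ c : ℕ → ℝ, ∀ j ≤ m,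
    ∑ i ∈ Finset.range (m + 1), c i * ((1 / 2 : ℝ) ^ i) ^ j = 0 ^ j := by
  classical
  let s := Finset.range (m + 1)
  let v : ℕ → ℝ := fun i => (1 / 2 : ℝ) ^ i
  have hv : Set.InjOn v s := by
    intro a _ b _ h
    exact (pow_right_injective₀ (by norm_num : (0 : ℝ) < 1 / 2) (by norm_num)) h
  refine ⟨fun i => (Lagrange.basis s v i).eval 0, fun j hj => ?_⟩
  have h := Lagrange.eq_interpolate (f := (Polynomial.X ^ j : Polynomial ℝ)) hv (by
    rw [Polynomial.degree_X_pow]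
    simp only [s, Finset.card_range]
    exact_mod_cast Nat.lt_succ_of_le hj)
  have h2 := congrArg (Polynomial.eval 0) h
  simp only [Lagrange.interpolate_apply, Polynomial.eval_finsetSum, Polynomial.eval_mul,
    Polynomial.eval_C, Polynomial.eval_pow, Polynomial.eval_X] at h2
  rw [h2]
  exact Finset.sum_congr rfl fun i _ => mul_comm _ _

theorem taylor_comb {m : ℕ} {c : ℕ → ℝ} (hc : ∀ j ≤ m,
    ∑ i ∈ Finset.range (m + 1), c i * ((1 / 2 : ℝ) ^ i) ^ j = 0 ^ j)
    {g : ℝ → ℝ} (hg : ContDiff ℝ (⊤ : ℕ∞) g) {B : ℝ}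
    (hB : ∀ t, ‖iteratedFDeriv ℝ (m + 1) g t‖ ≤ B) :
    |∑ i ∈ Finset.range (m + 1), c i * g ((1 / 2 : ℝ) ^ i) - g 0| ≤
      (∑ i ∈ Finset.range (m + 1), |c i|) * B := by
  have hB0 : 0 ≤ B := (norm_nonneg _).trans (hB 0)
  let P : ℝ → ℝ := fun x => taylorWithinEval g m (Icc 0 1) 0 x
  have hP : ∀ x ∈ Icc (0:ℝ) 1, |g x - P x| ≤ B := by
    intro x hx
    have h := taylor_mean_remainder_bound (f := g) (a := 0) (b := 1) (C := B) (x := x) (n := m)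
      zero_le_one (hg.of_le (by exact_mod_cast le_top)).contDiffOn hx (by
        intro y hy
        rw [iteratedDerivWithin_eq_iteratedDeriv (uniqueDiffOn_Icc zero_lt_one)
          (hg.of_le (by exact_mod_cast le_top)).contDiffAt hy,
          ← norm_iteratedFDeriv_eq_norm_iteratedDeriv]
        exact hB y)
    refine h.trans ?_
    have h1 : (x - 0) ^ (m + 1) ≤ 1 := pow_le_one₀ (by simpa using hx.1) (by simpa using hx.2)
    have h2 : (1 : ℝ) ≤ (m.factorial : ℝ) := by exact_mod_cast m.factorial_pos
    apply div_le_of_le_mul₀ (by positivity) hB0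
    exact mul_le_mul_of_nonneg_left (h1.trans h2) hB0
  have hPs : ∑ i ∈ Finset.range (m + 1), c i * P ((1 / 2 : ℝ) ^ i) = g 0 := by
    simp only [P, taylor_within_apply, sub_zero, smul_eq_mul, Finset.mul_sum]
    rw [Finset.sum_comm]
    have : ∀ k ∈ Finset.range (m + 1), ∑ i ∈ Finset.range (m + 1),
        c i * (((k.factorial : ℝ)⁻¹ * ((1 / 2 : ℝ) ^ i) ^ k) * iteratedDerivWithin k g (Icc 0 1) 0) =
        ((k.factorial : ℝ)⁻¹ * iteratedDerivWithin k g (Icc 0 1) 0) * 0 ^ k := by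
      intro k hk
      rw [← hc k (Nat.lt_succ_iff.1 (Finset.mem_range.1 hk)), Finset.mul_sum]
      exact Finset.sum_congr rfl fun i _ => by ring
    rw [Finset.sum_congr rfl this, Finset.sum_eq_single 0]
    · simp
    · intro k _ hk
      simp [hk]
    · simp
  rw [← hPs, ← Finset.sum_sub_distrib, Finset.sum_mul]
  refine (Finset.abs_sum_le_sum_abs _ _).trans (Finset.sum_le_sum fun i _ => ?_)
  rw [← mul_sub, abs_mul]
  exact mul_le_mul_of_nonneg_left (hP _ ⟨by positivity, pow_le_one₀ (by norm_num) (by norm_num)⟩)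
    (abs_nonneg _)

/-- The tweaked test function. -/
def hat (m : ℕ) (c : ℕ → ℝ) (φ : Ed d → ℝ) : Ed d → ℝ :=
  ∑ i ∈ Finset.range (m + 1), c i • scaled φ 0 ((1 / 2 : ℝ) ^ i)

theorem hat_test (m : ℕ) (c : ℕ → ℝ) {φ : Ed d → ℝ} (hφ : IsTestFunction φ) :
    IsTestFunction (hat m c φ) := by
  have : hat m c φ ∈ TF d := Submodule.sum_mem _ fun i _ =>
    Submodule.smul_mem _ _ (scaled_test hφ 0 (by positivity) : _ ∈ TF d)
  exact this

theorem scaled_hat (m : ℕ) (c : ℕ → ℝ) (φ : Ed d → ℝ) (y : Ed d) {l : ℝ} (hl : 0 < l) :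
    scaled (hat m c φ) y l =
      ∑ i ∈ Finset.range (m + 1), c i • scaled φ y (l * (1 / 2 : ℝ) ^ i) := by
  have h : ∀ i, scaled φ y (l * (1 / 2 : ℝ) ^ i) = scaled (scaled φ 0 ((1 / 2 : ℝ) ^ i)) y l := by
    intro i
    rw [scaled_scaled _ _ _ hl, smul_zero, add_zero]
  simp only [h]
  ext z
  simp only [scaled, hat, Finset.sum_apply, Pi.smul_apply, smul_eq_mul, Finset.mul_sum]
  exact Finset.sum_congr rfl fun i _ => by ring

theorem integral_scaled (φ : Ed d → ℝ) {l : ℝ} (hl : 0 < l) :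
    ∫ x, scaled φ 0 l x = ∫ x, φ x := by
  have h := cv_scaled (φ := φ) (f := fun _ : Ed d => (1 : ℝ)) hl 0
  simpa [cv] using h

theorem integral_abs_scaled (φ : Ed d → ℝ) {l : ℝ} (hl : 0 < l) :
    ∫ x, |scaled φ 0 l x| = ∫ x, |φ x| := by
  rw [← integral_scaled (fun x => |φ x|) hl]
  congr 1; ext x
  simp only [scaled, abs_mul, abs_inv, abs_pow, abs_of_pos hl]

theorem test_integrable {φ : Ed d → ℝ} (hφ : IsTestFunction φ) : Integrable φ :=
  hφ.1.continuous.integrable_of_hasCompactSupport hφ.2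

theorem integral_hat {m : ℕ} {c : ℕ → ℝ} (hc : ∀ j ≤ m,
    ∑ i ∈ Finset.range (m + 1), c i * ((1 / 2 : ℝ) ^ i) ^ j = 0 ^ j)
    {φ : Ed d → ℝ} (hφ : IsTestFunction φ) (h1 : ∫ x, φ x = 1) : ∫ x, hat m c φ x = 1 := by
  simp only [hat, Finset.sum_apply, Pi.smul_apply, smul_eq_mul]
  rw [integral_finsetSum]
  · have h2 := hc 0 (Nat.zero_le m)
    simp only [pow_zero, mul_one] at h2
    rw [← h2]
    refine Finset.sum_congr rfl fun i _ => ?_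
    rw [integral_const_mul, integral_scaled _ (by positivity), h1, mul_one]
  · intro i _
    exact (test_integrable (scaled_test hφ 0 (by positivity))).const_mul _

/-- First order approximation. -/
theorem cv_approx {F : Type*} [NormedAddCommGroup F] [NormedSpace ℝ F] [CompleteSpace F]
    {κ : Ed d → ℝ} (hκ : IsTestFunction κ) (h1 : ∫ x, κ x = 1) {a : ℝ}
    (ha : tsupport κ ⊆ closedBall 0 a) {G : Ed d → F} (hG : Continuous G) {B : ℝ} (hB0 : 0 ≤ B)
    (hB : ∀ x y, ‖G x - G y‖ ≤ B * ‖x - y‖) {l : ℝ} (hl : 0 < l) (x : Ed d) :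
    ‖cv (scaled κ 0 l) G x - G x‖ ≤ l * (((∫ z, |κ z|) * a) * B) := by
  have hi : Integrable fun z => κ z • G (x - l • z) := by
    apply Continuous.integrable_of_hasCompactSupport
    · have := hκ.1.continuous
      fun_prop
    · exact hκ.2.smul_right
  have h2 : G x = ∫ z, κ z • G x := by rw [integral_smul_const, h1, one_smul]
  rw [cv_scaled hl]
  nth_rewrite 1 [h2]
  rw [← integral_sub hi ((test_integrable hκ).smul_const _)]
  have h3 : l * (((∫ z, |κ z|) * a) * B) = ∫ z, |κ z| * (a * B * l) := by
    rw [integral_mul_const]; ring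
  rw [h3]
  apply norm_integral_le_of_norm_le
  · exact (test_integrable hκ).abs.mul_const _
  · filter_upwards with z
    rw [← smul_sub, norm_smul, Real.norm_eq_abs]
    by_cases hz : κ z = 0
    · simp [hz]
    · have hz' := ha (subset_tsupport _ hz)
      rw [mem_closedBall_zero_iff] at hz'
      apply mul_le_mul_of_nonneg_left _ (abs_nonneg _)
      refine (hB _ _).trans ?_
      rw [sub_sub_cancel_left, norm_neg, norm_smul, Real.norm_eq_abs, abs_of_pos hl]
      calc B * (l * ‖z‖) ≤ B * (l * a) := by gcongr
        _ = _ := by ring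

/-- Higher order approximation. -/
theorem hat_approx {m : ℕ} {c : ℕ → ℝ} (hc : ∀ j ≤ m,
    ∑ i ∈ Finset.range (m + 1), c i * ((1 / 2 : ℝ) ^ i) ^ j = 0 ^ j)
    {φ : Ed d → ℝ} (hφ : IsTestFunction φ) (h1 : ∫ x, φ x = 1) {a : ℝ} (ha0 : 0 ≤ a)
    (ha : tsupport φ ⊆ closedBall 0 a) {ψ : Ed d → ℝ} (hψ : IsTestFunction ψ)
    (hB : ∀ x, ‖iteratedFDeriv ℝ (m + 1) ψ x‖ ≤ 1) {l : ℝ} (hl : 0 < l) (x : Ed d) :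
    |cv (scaled (hat m c φ) 0 l) ψ x - ψ x| ≤
      ((∫ z, |φ z|) * ((∑ i ∈ Finset.range (m + 1), |c i|) * a ^ (m + 1))) * l ^ (m + 1) := by
  have hi : ∀ b : ℝ, Integrable fun z => φ z * ψ (x - b • z) := by
    intro b
    apply Continuous.integrable_of_hasCompactSupport
    · have := hφ.1.continuous
      have := hψ.1.continuous
      fun_prop
    · exact hφ.2.mul_right
  have e1 : cv (scaled (hat m c φ) 0 l) ψ x =
      ∑ i ∈ Finset.range (m + 1), c i * ∫ z, φ z * ψ (x - (l * (1 / 2 : ℝ) ^ i) • z) := by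
    rw [scaled_hat _ _ _ _ hl]
    have : ∀ i, ∫ z, φ z * ψ (x - (l * (1 / 2 : ℝ) ^ i) • z) =
        cv (scaled φ 0 (l * (1 / 2 : ℝ) ^ i)) ψ x := fun i => by
      rw [cv_scaled (by positivity)]; rfl
    simp only [this]
    simp only [cv, Finset.sum_apply, Pi.smul_apply, Finset.sum_smul, smul_assoc]
    rw [integral_finsetSum]
    · simp only [integral_smul]; rfl
    · intro i _
      have ht := scaled_test hφ 0 (l := l * (1 / 2 : ℝ) ^ i) (by positivity)
      exact (cv_integrable ht.1.continuous ht.2 hψ.1.continuous x).smul (c i)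
  have e2 : cv (scaled (hat m c φ) 0 l) ψ x - ψ x =
      ∫ z, φ z * (∑ i ∈ Finset.range (m + 1), c i * ψ (x - (l * (1 / 2 : ℝ) ^ i) • z) - ψ x) := by
    have : ∀ z, φ z * (∑ i ∈ Finset.range (m + 1), c i * ψ (x - (l * (1 / 2 : ℝ) ^ i) • z) - ψ x) =
        ∑ i ∈ Finset.range (m + 1), c i * (φ z * ψ (x - (l * (1 / 2 : ℝ) ^ i) • z)) - φ z * ψ x := by
      intro z
      rw [mul_sub, Finset.mul_sum]
      congr 1
      exact Finset.sum_congr rfl fun i _ => by ring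
    simp only [this]
    rw [integral_sub, integral_finsetSum, integral_mul_const, h1, one_mul, e1]
    · simp only [integral_const_mul]
    · exact fun i _ => (hi _).const_mul _
    · exact integrable_finsetSum _ fun i _ => (hi _).const_mul _
    · exact (test_integrable hφ).mul_const _
  rw [e2, ← Real.norm_eq_abs, mul_assoc, ← integral_mul_const]
  apply norm_integral_le_of_norm_le
  · exact (test_integrable hφ).abs.mul_const _
  · filter_upwards with z
    rw [norm_mul, Real.norm_eq_abs, Real.norm_eq_abs]
    by_cases hz : φ z = 0
    · simp [hz]
    have hz' := ha (subset_tsupport _ hz)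
    rw [mem_closedBall_zero_iff] at hz'
    apply mul_le_mul_of_nonneg_left _ (abs_nonneg _)
    let w : Ed d := -(l • z)
    have hw : ‖w‖ ≤ l * a := by
      simp only [w, norm_neg, norm_smul, Real.norm_eq_abs, abs_of_pos hl]
      gcongr
    let Lw : ℝ →L[ℝ] Ed d := ContinuousLinearMap.toSpanSingleton ℝ w
    let ψx : Ed d → ℝ := fun v => ψ (v + x)
    have hψx : ContDiff ℝ (⊤ : ℕ∞) ψx := hψ.1.comp (contDiff_id.add contDiff_const)
    have hg : ContDiff ℝ (⊤ : ℕ∞) (ψx ∘ Lw) := hψx.comp Lw.contDiff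
    have h := taylor_comb hc hg (B := (l * a) ^ (m + 1)) (by
      intro t
      rw [Lw.iteratedFDeriv_comp_right hψx t (by exact_mod_cast le_top)]
      refine (ContinuousMultilinearMap.norm_compContinuousLinearMap_le _ _).trans ?_
      simp only [ψx, iteratedFDeriv_comp_add_right, Finset.prod_const, Finset.card_univ,
        Fintype.card_fin]
      have hLw : ‖Lw‖ = ‖w‖ := ContinuousLinearMap.norm_toSpanSingleton w
      rw [hLw]
      calc _ ≤ 1 * (l * a) ^ (m + 1) := by
            gcongr
            exact hB _
        _ = _ := one_mul _)
    have hh : ∀ t : ℝ, (ψx ∘ Lw) t = ψ (x - (l * t) • z) := by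
      intro t
      simp only [ψx, Lw, w, Function.comp, ContinuousLinearMap.toSpanSingleton_apply]
      congr 1
      rw [smul_neg, smul_smul, mul_comm]
      abel
    simp only [hh] at h
    simp only [mul_zero, zero_smul, sub_zero] at h
    refine h.trans (le_of_eq ?_)
    rw [mul_pow]; ring

end Tweak

/-! ### The core estimate -/
section Core
variable {d : ℕ}

theorem T_hat_le {T : (Ed d → ℝ) →ₗ[ℝ] ℝ} (m : ℕ) (c : ℕ → ℝ) {φ : Ed d → ℝ} {M α : ℝ} {y : Ed d}
    (h : ∀ j : ℕ, 1 ≤ j → |T (scaled φ y ((1 / 2 : ℝ) ^ j))| ≤ M * ((1 / 2 : ℝ) ^ j) ^ α) (n : ℕ) :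
    |T (scaled (hat m c φ) y ((1 / 2 : ℝ) ^ (n + 1)))| ≤
      M * (∑ i ∈ Finset.range (m + 1), |c i| * ((1 / 2 : ℝ) ^ i) ^ α) *
        ((1 / 2 : ℝ) ^ (n + 1)) ^ α := by
  rw [scaled_hat _ _ _ _ (by positivity), map_sum]
  refine (Finset.abs_sum_le_sum_abs _ _).trans ?_
  rw [Finset.mul_sum, Finset.sum_mul]
  apply Finset.sum_le_sum
  intro i _
  rw [map_smul, smul_eq_mul, abs_mul, ← pow_add]
  have h1 := h (n + 1 + i) (by omega)
  rw [pow_add _ (n + 1) i, Real.mul_rpow (by positivity) (by positivity)] at h1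
  rw [pow_add _ (n + 1) i]
  calc _ ≤ _ := mul_le_mul_of_nonneg_left h1 (abs_nonneg (c i))
    _ = _ := by ring

theorem T_smooth_le {T : (Ed d → ℝ) →ₗ[ℝ] ℝ} (hT : IsDistribution T) {κ : Ed d → ℝ}
    (hκ : IsTestFunction κ) {l : ℝ} (hl : 0 < l) {R A b : ℝ} (hA : 0 ≤ A)
    (h : ∀ y ∈ closedBall (0 : Ed d) R, |T (scaled κ y l)| ≤ A)
    {g : Ed d → ℝ} (hg : Continuous g) (hgs : tsupport g ⊆ closedBall 0 R) (hb : ∀ x, |g x| ≤ b) :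
    |T (cv (scaled κ 0 l) g)| ≤ A * (b * volume.real (closedBall (0 : Ed d) R)) := by
  have hgc : HasCompactSupport g :=
    (isCompact_closedBall (0 : Ed d) R).of_isClosed_subset (isClosed_tsupport g) hgs
  rw [cv_comm]
  refine (T_cv_le hT (M := A) (scaled_test hκ 0 hl) hg hgc ?_).trans ?_
  · intro y hy
    have h1 := h y (hgs (subset_tsupport _ hy))
    have h2 : (fun x => scaled κ 0 l (x - y)) = scaled κ y l := by
      ext x; simp [scaled]
    rwa [h2]
  · apply mul_le_mul_of_nonneg_left _ hA
    have h3 : ∫ y, |g y| = ∫ y in closedBall (0 : Ed d) R, |g y| := by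
      rw [setIntegral_eq_integral_of_forall_compl_eq_zero]
      intro x hx
      rw [image_eq_zero_of_notMem_tsupport (fun h => hx (hgs h)), abs_zero]
    rw [h3]
    have h4 := norm_setIntegral_le_of_norm_le_const (μ := volume) (f := fun y => |g y|)
      (s := closedBall (0 : Ed d) R) (C := b) measure_closedBall_lt_top (fun x _ => by simpa using hb x)
    exact (le_abs_self _).trans h4

theorem T_limit {T : (Ed d → ℝ) →ₗ[ℝ] ℝ} (hT : IsDistribution T) {κ : Ed d → ℝ}
    (hκ : IsTestFunction κ) (h1 : ∫ x, κ x = 1) {ψ : Ed d → ℝ} (hψ : IsTestFunction ψ) :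
    Tendsto (fun n : ℕ => T (cv (scaled κ 0 ((1 / 2 : ℝ) ^ (n + 1)))
      (cv (scaled κ 0 ((1 / 2 : ℝ) ^ (n + 2))) ψ))) atTop (nhds (T ψ)) := by
  obtain ⟨a, ha0, ha⟩ := test_ball hκ.2
  obtain ⟨b, hb0, hb⟩ := test_ball hψ.2
  obtain ⟨q, C, hC⟩ := hT (closedBall 0 (a + (a + b))) (isCompact_closedBall _ _)
  set I := ∫ z, |κ z| with hI
  have hI0 : 0 ≤ I := integral_nonneg fun _ => abs_nonneg _
  have key : ∀ n : ℕ, |T (cv (scaled κ 0 ((1 / 2 : ℝ) ^ (n + 1)))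
      (cv (scaled κ 0 ((1 / 2 : ℝ) ^ (n + 2))) ψ)) - T ψ| ≤
      (|C| * (I * (I * a * Cnorm (q + 1) ψ) + I * a * Cnorm (q + 1) ψ)) * (1 / 2 : ℝ) ^ n := by
    intro n
    set l := (1 / 2 : ℝ) ^ (n + 1) with hl
    set l' := (1 / 2 : ℝ) ^ (n + 2) with hl'
    have hl0 : 0 < l := by positivity
    have hl0' : 0 < l' := by positivity
    have hl1 : l ≤ (1 / 2 : ℝ) ^ n := pow_le_pow_of_le_one (by norm_num) (by norm_num) (by omega)
    have hl1' : l' ≤ (1 / 2 : ℝ) ^ n := pow_le_pow_of_le_one (by norm_num) (by norm_num) (by omega)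
    have hl2 : l ≤ 1 := pow_le_one₀ (by norm_num) (by norm_num)
    have hl2' : l' ≤ 1 := pow_le_one₀ (by norm_num) (by norm_num)
    have hk := scaled_test hκ 0 hl0
    have hk' := scaled_test hκ 0 hl0'
    have hs : tsupport (scaled κ 0 l) ⊆ closedBall 0 a :=
      (scaled_tsupport ha 0 hl0).trans (closedBall_subset_closedBall (by nlinarith))
    have hs' : tsupport (scaled κ 0 l') ⊆ closedBall 0 a :=
      (scaled_tsupport ha 0 hl0').trans (closedBall_subset_closedBall (by nlinarith))
    have ht1 := cv_test hk'.1.continuous hk'.2 hψ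
    have ht2 := cv_test hk.1.continuous hk.2 ht1
    have hB0 : 0 ≤ Cnorm (q + 1) ψ := (norm_nonneg _).trans (le_Cnorm hψ (Nat.zero_le _) 0)
    rw [← map_sub]
    have hsub : IsTestFunction (cv (scaled κ 0 l) (cv (scaled κ 0 l') ψ) - ψ) :=
      (TF d).sub_mem ht2 hψ
    refine (hC _ hsub ?_).trans ?_
    · have e1 := cv_support hs (cv_support hs' hb)
      apply closure_minimal _ isClosed_closedBall
      intro x hx
      by_contra hxn
      apply hx
      have e2 : x ∉ closedBall (0 : Ed d) b := fun h =>
        hxn (closedBall_subset_closedBall (by linarith) h)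
      rw [Pi.sub_apply, image_eq_zero_of_notMem_tsupport (fun h => hxn (e1 h)),
        image_eq_zero_of_notMem_tsupport (fun h => e2 (hb h)), sub_zero]
    have hCn : Cnorm q (cv (scaled κ 0 l) (cv (scaled κ 0 l') ψ) - ψ) ≤
        (I * (I * a * Cnorm (q + 1) ψ) + I * a * Cnorm (q + 1) ψ) * (1 / 2 : ℝ) ^ n := by
      apply Cnorm_le
      intro i hi x
      set G := iteratedFDeriv ℝ i ψ with hG
      have hGc : Continuous G := test_cont hψ i
      have hlip : ∀ x y, ‖G x - G y‖ ≤ Cnorm (q + 1) ψ * ‖x - y‖ :=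
        test_lip hψ (fun x => le_Cnorm hψ (by omega) x)
      have e1 : iteratedFDeriv ℝ i (cv (scaled κ 0 l) (cv (scaled κ 0 l') ψ) - ψ) x
          = cv (scaled κ 0 l) (cv (scaled κ 0 l') G) x - G x := by
        rw [iteratedFDeriv_sub_apply, cv_iteratedFDeriv hk.1.continuous ht1.1 ht1.2,
          cv_iteratedFDeriv hk'.1.continuous hψ.1 hψ.2]
        · exact (ht2.1.of_le (by exact_mod_cast le_top)).contDiffAt
        · exact (hψ.1.of_le (by exact_mod_cast le_top)).contDiffAt
      have hGc' : Continuous (cv (scaled κ 0 l') G) := by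
        rw [hG, ← cv_iteratedFDeriv hk'.1.continuous hψ.1 hψ.2]
        exact test_cont ht1 i
      have e2 : cv (scaled κ 0 l) (cv (scaled κ 0 l') G) x - G x =
          cv (scaled κ 0 l) (cv (scaled κ 0 l') G - G) x + (cv (scaled κ 0 l) G x - G x) := by
        rw [cv_sub hk.1.continuous hk.2 hGc' hGc, Pi.sub_apply]; abel
      rw [e1, e2]
      refine (norm_add_le _ _).trans ?_
      rw [add_mul]
      apply add_le_add
      · refine (cv_bound hk.1.continuous hk.2 (B := (I * a * Cnorm (q + 1) ψ) * (1 / 2 : ℝ) ^ n)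
          ?_ x).trans ?_
        · intro z
          refine (cv_approx hκ h1 ha hGc hB0 hlip hl0' z).trans ?_
          rw [mul_comm l']
          exact mul_le_mul_of_nonneg_left hl1' (by positivity)
        · rw [integral_abs_scaled _ hl0, ← hI]
          exact le_of_eq (by ring)
      · refine (cv_approx hκ h1 ha hGc hB0 hlip hl0 x).trans ?_
        rw [mul_comm l]
        exact mul_le_mul_of_nonneg_left hl1 (by positivity)
    have hn0 : 0 ≤ Cnorm q (cv (scaled κ 0 l) (cv (scaled κ 0 l') ψ) - ψ) :=
      (norm_nonneg _).trans (le_Cnorm hsub (Nat.zero_le _) 0)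
    calc _ ≤ |C| * Cnorm q (cv (scaled κ 0 l) (cv (scaled κ 0 l') ψ) - ψ) :=
          mul_le_mul_of_nonneg_right (le_abs_self C) hn0
      _ ≤ _ := by
          rw [mul_assoc]
          exact mul_le_mul_of_nonneg_left hCn (abs_nonneg C)
  rw [tendsto_iff_dist_tendsto_zero]
  refine squeeze_zero (fun _ => dist_nonneg) (fun n => (Real.dist_eq _ _).trans_le (key n)) ?_
  have := (tendsto_pow_atTop_nhds_zero_of_lt_one (by norm_num : (0 : ℝ) ≤ 1 / 2)
    (by norm_num)).const_mul
      (|C| * (I * (I * a * Cnorm (q + 1) ψ) + I * a * Cnorm (q + 1) ψ))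
  simpa using this

theorem geom_bound {t : ℕ → ℝ} {D0 D ρ : ℝ} (hD : 0 ≤ D) (hρ0 : 0 ≤ ρ) (hρ : ρ < 1)
    (h0 : |t 0| ≤ D0) (h : ∀ n, |t (n + 1) - t n| ≤ D * ρ ^ n) (n : ℕ) :
    |t n| ≤ D0 + D / (1 - ρ) := by
  have h1 : ∀ n, |t n| ≤ D0 + ∑ i ∈ Finset.range n, D * ρ ^ i := by
    intro n
    induction n with
    | zero => simpa using h0
    | succ k ih =>
      rw [Finset.sum_range_succ]
      have := abs_add_le (t (k + 1) - t k) (t k)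
      rw [sub_add_cancel] at this
      linarith [h k]
  refine (h1 n).trans ?_
  rw [← Finset.mul_sum, div_eq_mul_inv]
  gcongr
  rw [← tsum_geometric_of_lt_one hρ0 hρ]
  exact (summable_geometric_of_lt_one hρ0 hρ).sum_le_tsum _ (fun i _ => by positivity)

theorem core {α : ℝ} {m : ℕ} (hm : 0 < (m : ℝ) + 1 + α) {φ : Ed d → ℝ}
    (hφ : IsTestFunction φ) (hφ1 : ∫ x, φ x = 1) :
    ∃ C R : ℝ, 0 ≤ C ∧ 0 ≤ R ∧ ∀ T : (Ed d → ℝ) →ₗ[ℝ] ℝ, IsDistribution T → ∀ M : ℝ, 0 ≤ M →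
      (∀ y ∈ closedBall (0 : Ed d) R, ∀ j : ℕ, 1 ≤ j →
        |T (scaled φ y ((1 / 2 : ℝ) ^ j))| ≤ M * ((1 / 2 : ℝ) ^ j) ^ α) →
      ∀ ψ : Ed d → ℝ, IsTestFunction ψ → tsupport ψ ⊆ closedBall 0 2 → (∀ x, |ψ x| ≤ 1) →
        (∀ x, ‖iteratedFDeriv ℝ (m + 1) ψ x‖ ≤ 1) → |T ψ| ≤ C * M := by
  obtain ⟨c, hc⟩ := exists_coeff m
  have hκ := hat_test m c hφ
  set κ := hat m c φ with hκdef
  have hκ1 : ∫ x, κ x = 1 := integral_hat hc hφ hφ1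
  obtain ⟨a, ha0, ha⟩ := test_ball hκ.2
  obtain ⟨a', ha0', ha'⟩ := test_ball hφ.2
  set I := ∫ z, |κ z| with hI
  have hI0 : 0 ≤ I := integral_nonneg fun _ => abs_nonneg _
  set W := ∑ i ∈ Finset.range (m + 1), |c i| * ((1 / 2 : ℝ) ^ i) ^ α with hW
  have hW0 : 0 ≤ W := Finset.sum_nonneg fun i _ => by positivity
  set V := volume.real (closedBall (0 : Ed d) (a + 2)) with hV
  have hV0 : 0 ≤ V := measureReal_nonneg
  set Q := (∫ z, |φ z|) * ((∑ i ∈ Finset.range (m + 1), |c i|) * a' ^ (m + 1)) with hQ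
  have hQ0 : 0 ≤ Q := mul_nonneg (integral_nonneg fun _ => abs_nonneg _)
    (mul_nonneg (Finset.sum_nonneg fun i _ => abs_nonneg _) (by positivity))
  set ρ := (1 / 2 : ℝ) ^ ((m : ℝ) + 1 + α) with hρ
  have hρ0 : 0 ≤ ρ := by positivity
  have hρ1 : ρ < 1 := Real.rpow_lt_one (by norm_num) (by norm_num) hm
  set D0 := W * (1 / 2 : ℝ) ^ α * (I * V) with hD0
  set D := W * (1 / 4 : ℝ) ^ α * (2 * Q * V) with hD
  have hD00 : 0 ≤ D0 := by positivity
  have hDn : 0 ≤ D := by positivity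
  refine ⟨D0 + D / (1 - ρ), a + 2, ?_, by positivity, ?_⟩
  · have : 0 < 1 - ρ := by linarith
    positivity
  intro T hT M hM hyp ψ hψ hψs hψ1 hψm
  have hk : ∀ n : ℕ, IsTestFunction (scaled κ 0 ((1 / 2 : ℝ) ^ n)) := fun n =>
    scaled_test hκ 0 (by positivity)
  have hks : ∀ n : ℕ, tsupport (scaled κ 0 ((1 / 2 : ℝ) ^ n)) ⊆ closedBall 0 a := fun n =>
    (scaled_tsupport ha 0 (by positivity)).trans (closedBall_subset_closedBall
      (mul_le_of_le_one_left ha0 (pow_le_one₀ (by norm_num) (by norm_num))))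
  have hcs : ∀ n : ℕ, tsupport (cv (scaled κ 0 ((1 / 2 : ℝ) ^ n)) ψ) ⊆ closedBall 0 (a + 2) :=
    fun n => cv_support (hks n) hψs
  have hct : ∀ n : ℕ, IsTestFunction (cv (scaled κ 0 ((1 / 2 : ℝ) ^ n)) ψ) := fun n =>
    cv_test (hk n).1.continuous (hk n).2 hψ
  have hTn : ∀ n : ℕ, ∀ (g : Ed d → ℝ) (b : ℝ), Continuous g → tsupport g ⊆ closedBall 0 (a + 2) →
      (∀ x, |g x| ≤ b) → |T (cv (scaled κ 0 ((1 / 2 : ℝ) ^ (n + 1))) g)| ≤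
        M * W * ((1 / 2 : ℝ) ^ (n + 1)) ^ α * (b * V) := by
    intro n g b hg hgs hb
    exact T_smooth_le hT hκ (by positivity) (by positivity)
      (fun y hy => T_hat_le m c (fun j hj => hyp y hy j hj) n) hg hgs hb
  have hlim := T_limit hT hκ hκ1 hψ
  have happ : ∀ n : ℕ, ∀ x, |cv (scaled κ 0 ((1 / 2 : ℝ) ^ n)) ψ x - ψ x| ≤
      Q * ((1 / 2 : ℝ) ^ n) ^ (m + 1) := fun n x =>
    hat_approx hc hφ hφ1 ha0' ha' hψ hψm (by positivity) x
  have hgeo := geom_bound (t := fun n : ℕ => T (cv (scaled κ 0 ((1 / 2 : ℝ) ^ (n + 1)))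
      (cv (scaled κ 0 ((1 / 2 : ℝ) ^ (n + 2))) ψ))) (D0 := M * D0) (D := M * D) (ρ := ρ)
      (by positivity) hρ0 hρ1 ?_ ?_
  · refine le_of_tendsto hlim.abs (Eventually.of_forall fun n => (hgeo n).trans (le_of_eq ?_))
    ring
  · have := hTn 0 _ I (hct 2).1.continuous (hcs 2) (fun x => by
      have := cv_bound (hk 2).1.continuous (hk 2).2 (f := ψ) (B := 1) hψ1 x
      rwa [integral_abs_scaled _ (by positivity), mul_one] at this)
    refine this.trans (le_of_eq ?_)
    simp only [zero_add, pow_one]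
    ring
  · intro n
    have e1 : cv (scaled κ 0 ((1 / 2 : ℝ) ^ (n + 1))) (cv (scaled κ 0 ((1 / 2 : ℝ) ^ (n + 2))) ψ) =
        cv (scaled κ 0 ((1 / 2 : ℝ) ^ (n + 2))) (cv (scaled κ 0 ((1 / 2 : ℝ) ^ (n + 1))) ψ) :=
      cv_cv_comm (hk _).1.continuous (hk _).2 (hk _).1.continuous (hk _).2 hψ.1.continuous
    rw [e1, ← map_sub, show n + 1 + 1 = n + 2 from rfl, show n + 1 + 2 = n + 3 from rfl,
      ← cv_sub (hk _).1.continuous (hk _).2 (hct _).1.continuous (hct _).1.continuous]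
    have e2 := hTn (n + 1) (cv (scaled κ 0 ((1 / 2 : ℝ) ^ (n + 3))) ψ -
      cv (scaled κ 0 ((1 / 2 : ℝ) ^ (n + 1))) ψ) (2 * Q * ((1 / 2 : ℝ) ^ n) ^ (m + 1))
      ((hct _).1.continuous.sub (hct _).1.continuous) ?_ ?_
    · refine e2.trans (le_of_eq ?_)
      have e3 : ((1 / 2 : ℝ) ^ (n + 1 + 1)) ^ α = (1 / 4 : ℝ) ^ α * ((1 / 2 : ℝ) ^ n) ^ α := by
        rw [← Real.mul_rpow (by norm_num) (by positivity)]
        congr 1; ring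
      have e4 : ρ ^ n = ((1 / 2 : ℝ) ^ n) ^ α * ((1 / 2 : ℝ) ^ n) ^ (m + 1) := by
        rw [← Real.rpow_natCast _ (m + 1), ← Real.rpow_add (by positivity), hρ,
          ← Real.rpow_natCast, ← Real.rpow_natCast, ← Real.rpow_mul (by norm_num),
          ← Real.rpow_mul (by norm_num)]
        congr 1; push_cast; ring
      rw [e3, e4, hD]; ring
    · apply closure_minimal _ isClosed_closedBall
      intro x hx
      by_contra hxn
      apply hx
      rw [Pi.sub_apply, image_eq_zero_of_notMem_tsupport (fun h => hxn (hcs _ h)),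
        image_eq_zero_of_notMem_tsupport (fun h => hxn (hcs _ h)), sub_zero]
    · intro x
      have f1 : ∀ k : ℕ, n ≤ k → |cv (scaled κ 0 ((1 / 2 : ℝ) ^ k)) ψ x - ψ x| ≤
          Q * ((1 / 2 : ℝ) ^ n) ^ (m + 1) := fun k hk => by
        refine (happ k x).trans (mul_le_mul_of_nonneg_left ?_ hQ0)
        exact pow_le_pow_left₀ (by positivity)
          (pow_le_pow_of_le_one (by norm_num) (by norm_num) hk) _
      have f2 := f1 (n + 3) (by omega)
      have f3 := f1 (n + 1) (by omega)
      rw [Pi.sub_apply]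
      rw [abs_le] at f2 f3 ⊢
      constructor <;> linarith [f2.1, f2.2, f3.1, f3.2]

end Core

/-! ### The main theorem -/
section Main
variable {d : ℕ}

/-- Scaling as a linear map. -/
def scaledL (x : Ed d) (h : ℝ) : (Ed d → ℝ) →ₗ[ℝ] (Ed d → ℝ) where
  toFun f := scaled f x h
  map_add' f g := by ext z; simp [scaled, mul_add]
  map_smul' c f := by ext z; simp [scaled]; ring

theorem scaled_dist {T : (Ed d → ℝ) →ₗ[ℝ] ℝ} (hT : IsDistribution T) (x : Ed d) {h : ℝ}
    (h0 : 0 < h) (h1 : h ≤ 1) : IsDistribution (T ∘ₗ scaledL x h) := by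
  intro K hK
  obtain ⟨a, ha⟩ := hK.isBounded.subset_closedBall 0
  obtain ⟨q, C, hC⟩ := hT (closedBall x (h * a)) (isCompact_closedBall _ _)
  refine ⟨q, |C| * ((h ^ d)⁻¹ * (h⁻¹) ^ q), ?_⟩
  intro f hf hfs
  have ht := scaled_test hf x h0
  have e1 := hC (scaled f x h) ht (scaled_tsupport (hfs.trans ha) x h0)
  have e2 : 0 ≤ Cnorm q (scaled f x h) := (norm_nonneg _).trans (le_Cnorm ht (Nat.zero_le _) 0)
  have e3 : Cnorm q (scaled f x h) ≤ ((h ^ d)⁻¹ * (h⁻¹) ^ q) * Cnorm q f := by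
    apply Cnorm_le
    intro i hi z
    rw [scaled_iteratedFDeriv hf.1, norm_smul, norm_smul, Real.norm_of_nonneg (by positivity),
      Real.norm_of_nonneg (by positivity), mul_assoc]
    have e4 := le_Cnorm hf hi (h⁻¹ • (z - x))
    have e5 : (h⁻¹) ^ i ≤ (h⁻¹) ^ q := pow_le_pow_right₀ ((one_le_inv₀ h0).2 h1) hi
    gcongr
  calc |(T ∘ₗ scaledL x h) f| = |T (scaled f x h)| := rfl
    _ ≤ |C| * Cnorm q (scaled f x h) := e1.trans (mul_le_mul_of_nonneg_right (le_abs_self C) e2)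
    _ ≤ _ := by
      rw [mul_assoc]
      exact mul_le_mul_of_nonneg_left e3 (abs_nonneg C)

theorem exists_good (r : ℕ) : ∃ φ : Ed d → ℝ, Br r φ ∧ (∫ x, φ x) ≠ 0 := by
  let f : ContDiffBump (0 : Ed d) := ⟨1 / 2, 1, by norm_num, by norm_num⟩
  have hf : IsTestFunction (f : Ed d → ℝ) := ⟨f.contDiff, f.hasCompactSupport⟩
  have h0 : 0 ≤ Cnorm r (f : Ed d → ℝ) := (norm_nonneg _).trans (le_Cnorm hf (Nat.zero_le _) 0)
  have h1 : 0 < 1 + Cnorm r (f : Ed d → ℝ) := by linarith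
  refine ⟨(1 + Cnorm r (f : Ed d → ℝ))⁻¹ • (f : Ed d → ℝ), ⟨(TF d).smul_mem _ hf, ?_, ?_⟩, ?_⟩
  · have : tsupport (f : Ed d → ℝ) = closedBall 0 1 := f.tsupport_eq
    rw [← this]
    exact tsupport_smul_subset_right (fun _ => (1 + Cnorm r (f : Ed d → ℝ))⁻¹) _
  · apply Cnorm_le
    intro i hi x
    rw [iteratedFDeriv_const_smul_apply (hf.1.of_le (by exact_mod_cast le_top)).contDiffAt,
      norm_smul, Real.norm_of_nonneg (by positivity), inv_mul_le_iff₀ h1]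
    linarith [le_Cnorm hf hi x]
  · have : ∫ x, ((1 + Cnorm r (f : Ed d → ℝ))⁻¹ • (f : Ed d → ℝ)) x =
        (1 + Cnorm r (f : Ed d → ℝ))⁻¹ * ∫ x, f x := by
      rw [← integral_const_mul]; rfl
    rw [this]
    have := f.integral_pos (μ := volume)
    positivity

theorem dense_rat : Dense {x : Ed d | ∀ i : Fin d, ∃ q : ℚ, x i = (q : ℝ)} := by
  have h1 : DenseRange (Pi.map fun (_ : Fin d) (q : ℚ) => (q : ℝ)) :=
    DenseRange.piMap fun _ => Rat.denseRange_cast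
  have h2 := (EuclideanSpace.equiv (Fin d) ℝ).symm.surjective.denseRange.comp h1
    (EuclideanSpace.equiv (Fin d) ℝ).symm.continuous
  apply h2.mono
  rintro _ ⟨q, rfl⟩ i
  exact ⟨q i, rfl⟩

theorem rat_extend {T : (Ed d → ℝ) →ₗ[ℝ] ℝ} (hT : IsDistribution T) {φ : Ed d → ℝ}
    (hφ : IsTestFunction φ) {l : ℝ} (hl : 0 < l) {b b' : ℝ} (hb : b < b') {M : ℝ}
    (h : ∀ x ∈ closedBall (0 : Ed d) b', (∀ i : Fin d, ∃ q : ℚ, x i = (q : ℝ)) →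
      |T (scaled φ x l)| ≤ M) (x : Ed d) (hx : x ∈ closedBall (0 : Ed d) b) :
    |T (scaled φ x l)| ≤ M := by
  have hc := T_trans_continuousOn hT ⟨scaled φ 0 l, scaled_test hφ 0 hl⟩ b'
  have e : ∀ y, (tsl ⟨scaled φ 0 l, scaled_test hφ 0 hl⟩ y : Ed d → ℝ) = scaled φ y l := by
    intro y; ext z; simp [tsl, scaled]
  simp only [e] at hc
  set S := {x : Ed d | ∀ i : Fin d, ∃ q : ℚ, x i = (q : ℝ)}
  have hxb : x ∈ ball (0 : Ed d) b' := closedBall_subset_ball hb hx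
  have hxc := dense_rat.open_subset_closure_inter (isOpen_ball (x := (0 : Ed d)) (ε := b')) hxb
  have h1 : ContinuousWithinAt (fun y => |T (scaled φ y l)|) (ball 0 b' ∩ S) x :=
    ((hc x (ball_subset_closedBall hxb)).abs).mono (inter_subset_left.trans ball_subset_closedBall)
  have h2 := h1.mem_closure_image hxc
  have h3 : closure ((fun y => |T (scaled φ y l)|) '' (ball 0 b' ∩ S)) ⊆ Iic M := by
    apply closure_minimal _ isClosed_Iic
    rintro _ ⟨y, hy, rfl⟩
    exact h y (ball_subset_closedBall hy.1) hy.2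
  exact h3 h2

theorem two_zpow (k : ℕ) : (2 : ℝ) ^ (-(k : ℤ)) = (1 / 2 : ℝ) ^ k := by
  rw [zpow_neg, zpow_natCast, one_div, inv_pow]

theorem hard_dir {α : ℝ} (hα : α ≤ 0) {T : (Ed d → ℝ) →ₗ[ℝ] ℝ} (hT : IsDistribution T)
    {φ : Ed d → ℝ} (hφ : IsTestFunction φ) (hφ1 : ∫ x, φ x = 1)
    (h : ∀ n : ℕ, ∃ C : ℝ, ∀ x ∈ closedBall (0 : Ed d) n, ∀ k : ℕ, 1 ≤ k →
      |T (scaled φ x ((1 / 2 : ℝ) ^ k))| ≤ C * ((1 / 2 : ℝ) ^ k) ^ α) : HolderNeg α T := by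
  intro K hK
  obtain ⟨b, hb⟩ := hK.isBounded.subset_closedBall 0
  have hm : 0 < ((Nat.floor (-α) : ℕ) : ℝ) + 1 + α := by
    have := Nat.lt_floor_add_one (-α)
    linarith
  obtain ⟨C₀, R, hC0, hR, hcore⟩ := core hm hφ hφ1
  obtain ⟨n, hn⟩ := exists_nat_ge (b + R)
  obtain ⟨C, hC⟩ := h n
  refine ⟨C₀ * |C| * (1 / 2 : ℝ) ^ α, ?_⟩
  intro x hx ε hε ψ hψ
  obtain ⟨N, hN1, hN2⟩ := exists_nat_pow_near_of_lt_one hε.1 hε.2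
    (by norm_num : (0 : ℝ) < 1 / 2) (by norm_num)
  set l := (1 / 2 : ℝ) ^ (N + 1) with hl
  have hl0 : 0 < l := by positivity
  have hl1 : l ≤ 1 := pow_le_one₀ (by norm_num) (by norm_num)
  have hεl : ε ≤ 2 * l := by
    rw [hl, pow_succ]; linarith
  set s := ε / l with hs
  have hs1 : 1 ≤ s := by rw [hs, one_le_div hl0]; exact hN1.le
  have hs2 : s ≤ 2 := by rw [hs, div_le_iff₀ hl0]; exact hεl
  have hs0 : 0 < s := by linarith
  have hls : l * s = ε := by rw [hs]; field_simp
  have hder : ∀ i ≤ rIndex α, ∀ z, ‖iteratedFDeriv ℝ i (scaled ψ 0 s) z‖ ≤ 1 := by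
    intro i hi z
    rw [scaled_iteratedFDeriv hψ.1.1, norm_smul, norm_smul, Real.norm_of_nonneg (by positivity),
      Real.norm_of_nonneg (by positivity)]
    have e1 := (le_Cnorm hψ.1 hi (s⁻¹ • (z - 0))).trans hψ.2.2
    have e2 : (s ^ d)⁻¹ ≤ 1 := inv_le_one_of_one_le₀ (one_le_pow₀ hs1)
    have e3 : (s⁻¹) ^ i ≤ 1 := pow_le_one₀ (by positivity) (inv_le_one_of_one_le₀ hs1)
    exact mul_le_one₀ e2 (by positivity) (mul_le_one₀ e3 (norm_nonneg _) e1)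
  have key := hcore (T ∘ₗ scaledL x l) (scaled_dist hT x hl0 hl1) (|C| * l ^ α) (by positivity)
    ?_ (scaled ψ 0 s) (scaled_test hψ.1 0 hs0)
    ((scaled_tsupport hψ.2.1 0 hs0).trans (closedBall_subset_closedBall (by linarith)))
    (fun z => ?_) (fun z => hder _ le_rfl z)
  · have e1 : (T ∘ₗ scaledL x l) (scaled ψ 0 s) = T (scaled ψ x ε) := by
      change T (scaled (scaled ψ 0 s) x l) = _
      rw [scaled_scaled _ _ _ hl0, smul_zero, add_zero, hls]
    rw [e1] at key
    refine key.trans ?_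
    have e2 : l ^ α ≤ (1 / 2 * ε) ^ α :=
      Real.rpow_le_rpow_of_nonpos (by linarith [hε.1]) (by linarith) hα
    rw [Real.mul_rpow (by norm_num) hε.1.le] at e2
    calc C₀ * (|C| * l ^ α) ≤ C₀ * (|C| * ((1 / 2) ^ α * ε ^ α)) := by gcongr
      _ = _ := by ring
  · intro y hy j hj
    have e1 : (T ∘ₗ scaledL x l) (scaled φ y ((1 / 2 : ℝ) ^ j)) =
        T (scaled φ (x + l • y) ((1 / 2 : ℝ) ^ (N + 1 + j))) := by
      change T (scaled (scaled φ y _) x l) = _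
      rw [scaled_scaled _ _ _ hl0, pow_add]
    rw [e1]
    refine (hC _ ?_ _ (by omega)).trans ?_
    · rw [mem_closedBall_zero_iff] at hy ⊢
      have e2 := mem_closedBall_zero_iff.1 (hb hx)
      have e3 := norm_add_le x (l • y)
      rw [norm_smul, Real.norm_of_nonneg hl0.le] at e3
      have e4 : l * ‖y‖ ≤ ‖y‖ := mul_le_of_le_one_left (norm_nonneg _) hl1
      linarith
    · rw [pow_add, Real.mul_rpow (by positivity) (by positivity), ← hl, mul_assoc]
      exact mul_le_mul_of_nonneg_right (le_abs_self C) (by positivity)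
  · have := hder 0 (Nat.zero_le _) z
    rwa [norm_iteratedFDeriv_zero] at this

end Main

/-- Countable criterion for negative Hölder spaces: rational points
and dyadic scales suffice. -/
theorem stmt12 {d : ℕ} (α : ℝ) (hα : α ≤ 0)
    (T : (Ed d → ℝ) →ₗ[ℝ] ℝ) (hT : IsDistribution T) :
    HolderNeg α T ↔
      ∃ φ : Ed d → ℝ, IsTestFunction φ ∧ (∫ x, φ x) ≠ 0 ∧
        ∀ n : ℕ, ∃ C : ℝ, ∀ x ∈ closedBall (0 : Ed d) n,
          (∀ i : Fin d, ∃ q : ℚ, x i = (q : ℝ)) → ∀ k : ℕ, 1 ≤ k →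
            |T (scaled φ x ((2:ℝ) ^ (-(k:ℤ))))| ≤ C * ((2:ℝ) ^ (-(k:ℤ))) ^ α := by
  constructor
  · intro h
    obtain ⟨φ, hφ, hφ0⟩ := exists_good (d := d) (rIndex α)
    refine ⟨φ, hφ.1, hφ0, fun n => ?_⟩
    obtain ⟨C, hC⟩ := h (closedBall 0 n) (isCompact_closedBall _ _)
    refine ⟨C, fun x hx _ k _ => hC x hx _ ?_ φ hφ⟩
    rw [two_zpow]
    exact ⟨by positivity, pow_le_one₀ (by norm_num) (by norm_num)⟩
  · rintro ⟨φ, hφ, hφ0, h⟩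
    have ht : IsTestFunction ((∫ x, φ x)⁻¹ • φ) := (TF d).smul_mem _ hφ
    have hi : ∫ x, ((∫ x, φ x)⁻¹ • φ) x = 1 := by
      simp only [Pi.smul_apply, smul_eq_mul]
      rw [integral_const_mul, inv_mul_cancel₀ hφ0]
    refine hard_dir hα hT ht hi fun n => ?_
    obtain ⟨C, hC⟩ := h (n + 1)
    refine ⟨|(∫ x, φ x)⁻¹| * C, fun x hx k hk => ?_⟩
    have e1 : T (scaled ((∫ x, φ x)⁻¹ • φ) x ((1 / 2 : ℝ) ^ k)) =
        (∫ x, φ x)⁻¹ * T (scaled φ x ((1 / 2 : ℝ) ^ k)) := by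
      exact (T ∘ₗ scaledL x ((1 / 2 : ℝ) ^ k)).map_smul (∫ x, φ x)⁻¹ φ
    rw [e1, abs_mul, mul_assoc]
    apply mul_le_mul_of_nonneg_left _ (abs_nonneg _)
    refine rat_extend hT hφ (by positivity) (b := n) (b' := ((n + 1 : ℕ) : ℝ))
      (by push_cast; linarith) (fun y hy hq => ?_) x hx
    have := hC y hy hq k hk
    rwa [two_zpow] at this
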